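/- Consider the Reward-Approximation loss of the softmax-parametrized policy, L(θ) = Σ_{x∈X} 𝒟(x) · Σ_{y∈Y} π_θ(y|x)·(r_θ(x,y) − r(x,y))², where r_θ(x,y) = (1/τ)·log(Z(x)·π_θ(y|x)) and Z(x) = Σ_{y'∈Y} exp(τ·r(x,y')). Let ε₁ ≥ 0 and suppose θ satisfies |r_θ(x,y) − r(x,y)| ≤ ε₁ for all x ∈ X and y ∈ Y. Then the second derivative of L at θ satisfies |D²L(θ)(z,z)| ≤ (3·ε₁² + 18·ε₁/τ + 8/τ² + max{ε₁² + 2·ε₁/τ, 1/τ})·Σ_{x,y} z(x,y)² for every direction z : X × Y → ℝ. -/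

import Mathlib

/-!
The residual `r_θ - r` is an affine function of `log π_θ`: it equals `log π_θ(y|x) / τ - b(x, y)`
with `b` independent of `θ`. So everything reduces to the functions
`a ↦ ∑ y, π y * (β * log π y - b y) ^ 2`, where `π` is the softmax of `a`. Along a line with
direction `z`, `log π y` has derivative `z y - m` and `m` has derivative `V`, where `m` and `V` are
the mean and the variance of `z` under `π`. Hence the second derivative is a combination of two
averages of quadratic polynomials in the residual, each of total weight `V`, and `V ≤ ∑ y, z y ^ 2`.
-/

section LineDerivative

variable {𝕜 E F : Type*} [NontriviallyNormedField 𝕜] [NormedAddCommGroup E] [NormedSpace 𝕜 E]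
  [NormedAddCommGroup F] [NormedSpace 𝕜 F]

lemma fderiv_fderiv_apply_apply_self_of_hasLineDerivAt {f g : E → F} {x v : E} {c : F}
    (hf : Differentiable 𝕜 f) (hf' : DifferentiableAt 𝕜 (fderiv 𝕜 f) x)
    (hg : ∀ w, HasLineDerivAt 𝕜 f (g w) w v) (hc : HasLineDerivAt 𝕜 g c x v) :
    fderiv 𝕜 (fderiv 𝕜 f) x v v = c := by
  have hg_eq : g = fun w ↦ fderiv 𝕜 f w v :=
    funext fun w ↦ (hg w).unique ((hf w).hasFDerivAt.hasLineDerivAt v)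
  have hg' := (hf'.hasFDerivAt.clm_apply (hasFDerivAt_const v x)).hasLineDerivAt v
  rw [← hg_eq] at hg'
  simpa using hg'.unique hc

end LineDerivative

section Weights

variable {Y : Type*} [Fintype Y]

/-- The variance of `z` under the weights `p`; its mean is `p ⬝ᵥ z`. -/
def weightedVariance (p z : Y → ℝ) : ℝ :=
  ∑ y, p y * (z y - p ⬝ᵥ z) ^ 2

lemma weightedVariance_nonneg {p : Y → ℝ} (hp : 0 ≤ p) (z : Y → ℝ) :
    0 ≤ weightedVariance p z :=
  Finset.sum_nonneg fun y _ ↦ mul_nonneg (hp y) (sq_nonneg _)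

lemma weightedVariance_eq_sum_mul_sq_sub_sq {p : Y → ℝ} (hp : ∑ y, p y = 1) (z : Y → ℝ) :
    weightedVariance p z = ∑ y, p y * z y ^ 2 - (p ⬝ᵥ z) ^ 2 := by
  set m := p ⬝ᵥ z with hm
  calc weightedVariance p z
      = ∑ y, (p y * z y ^ 2 - 2 * m * (p y * z y) + m ^ 2 * p y) :=
        Finset.sum_congr rfl fun y _ ↦ by rw [← hm]; ring
    _ = ∑ y, p y * z y ^ 2 - 2 * m * m + m ^ 2 * 1 := by
        rw [Finset.sum_add_distrib, Finset.sum_sub_distrib, ← Finset.mul_sum, ← Finset.mul_sum, hp,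
          hm, dotProduct]
    _ = ∑ y, p y * z y ^ 2 - m ^ 2 := by ring

lemma weightedVariance_le_sum_sq {p : Y → ℝ} (hp : p ∈ stdSimplex ℝ Y) (z : Y → ℝ) :
    weightedVariance p z ≤ ∑ y, z y ^ 2 :=
  calc weightedVariance p z
      = ∑ y, p y * z y ^ 2 - (p ⬝ᵥ z) ^ 2 := weightedVariance_eq_sum_mul_sq_sub_sq hp.2 z
    _ ≤ ∑ y, p y * z y ^ 2 := sub_le_self _ (sq_nonneg _)
    _ ≤ ∑ y, z y ^ 2 := Finset.sum_le_sum fun y _ ↦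
        mul_le_of_le_one_left (sq_nonneg _) (mem_Icc_of_mem_stdSimplex hp y).2

lemma abs_sum_mul_le_sum_mul {w f : Y → ℝ} {M : ℝ} (hw : 0 ≤ w) (hf : ∀ y, |f y| ≤ M) :
    |∑ y, w y * f y| ≤ (∑ y, w y) * M :=
  calc |∑ y, w y * f y| ≤ ∑ y, |w y * f y| := Finset.abs_sum_le_sum_abs _ _
    _ ≤ ∑ y, w y * M := Finset.sum_le_sum fun y _ ↦ by
        rw [abs_mul, abs_of_nonneg (hw y)]
        exact mul_le_mul_of_nonneg_left (hf y) (hw y)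
    _ = (∑ y, w y) * M := (Finset.sum_mul ..).symm

end Weights

lemma abs_sq_add_mul_le {e ε : ℝ} (he : |e| ≤ ε) (c : ℝ) : |e ^ 2 + c * e| ≤ ε ^ 2 + |c| * ε :=
  calc |e ^ 2 + c * e| ≤ |e| ^ 2 + |c| * |e| := by
        rw [← abs_pow, ← abs_mul]
        exact abs_add_le _ _
    _ ≤ ε ^ 2 + |c| * ε := by gcongr

section Softmax

variable {Y : Type*} [Fintype Y]

/-- The log-partition function of the logits `a`. -/
noncomputable def logSumExp (a : Y → ℝ) : ℝ :=
  Real.log (∑ y, Real.exp (a y))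

/-- The softmax distribution of the logits `a`, encoded as the exponential of its log-probabilities
`a y - logSumExp a`; see `softmax_eq_div` for the quotient form. -/
noncomputable def softmax (a : Y → ℝ) (y : Y) : ℝ :=
  Real.exp (a y - logSumExp a)

lemma softmax_nonneg (a : Y → ℝ) : 0 ≤ softmax a :=
  fun _ ↦ (Real.exp_pos _).le

variable [Nonempty Y]

lemma sum_exp_pos (a : Y → ℝ) : 0 < ∑ y, Real.exp (a y) :=
  Finset.sum_pos (fun _ _ ↦ Real.exp_pos _) Finset.univ_nonempty

lemma softmax_eq_div (a : Y → ℝ) (y : Y) :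
    softmax a y = Real.exp (a y) / ∑ y', Real.exp (a y') := by
  rw [softmax, logSumExp, Real.exp_sub, Real.exp_log (sum_exp_pos a)]

lemma softmax_mem_stdSimplex (a : Y → ℝ) : softmax a ∈ stdSimplex ℝ Y := by
  refine ⟨softmax_nonneg a, ?_⟩
  simp only [softmax_eq_div, ← Finset.sum_div]
  exact div_self (sum_exp_pos a).ne'

lemma contDiff_logSumExp {n : WithTop ℕ∞} : ContDiff ℝ n (logSumExp : (Y → ℝ) → ℝ) :=
  ContDiff.log (by fun_prop) fun a ↦ (sum_exp_pos a).ne'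

variable {a : ℝ → Y → ℝ} {z : Y → ℝ} {t : ℝ}

lemma hasDerivAt_logSumExp (ha : HasDerivAt a z t) :
    HasDerivAt (fun s ↦ logSumExp (a s)) (softmax (a t) ⬝ᵥ z) t := by
  have hsum : HasDerivAt (fun s ↦ ∑ y, Real.exp (a s y)) (∑ y, Real.exp (a t y) * z y) t :=
    HasDerivAt.fun_sum fun y _ ↦ (hasDerivAt_pi.1 ha y).exp
  refine (hsum.log (sum_exp_pos (a t)).ne').congr_deriv ?_
  simp only [dotProduct, softmax_eq_div, Finset.sum_div, div_mul_eq_mul_div]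

lemma hasDerivAt_sub_logSumExp (ha : HasDerivAt a z t) (y : Y) :
    HasDerivAt (fun s ↦ a s y - logSumExp (a s)) (z y - softmax (a t) ⬝ᵥ z) t :=
  (hasDerivAt_pi.1 ha y).fun_sub (hasDerivAt_logSumExp ha)

lemma hasDerivAt_softmax (ha : HasDerivAt a z t) (y : Y) :
    HasDerivAt (fun s ↦ softmax (a s) y) (softmax (a t) y * (z y - softmax (a t) ⬝ᵥ z)) t :=
  (hasDerivAt_sub_logSumExp ha y).exp

lemma hasDerivAt_softmax_dotProduct (ha : HasDerivAt a z t) :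
    HasDerivAt (fun s ↦ softmax (a s) ⬝ᵥ z) (weightedVariance (softmax (a t)) z) t := by
  have hsum : HasDerivAt (fun s ↦ softmax (a s) ⬝ᵥ z)
      (∑ y, softmax (a t) y * (z y - softmax (a t) ⬝ᵥ z) * z y) t :=
    HasDerivAt.fun_sum fun y _ ↦ (hasDerivAt_softmax ha y).mul_const (z y)
  refine hsum.congr_deriv ?_
  rw [weightedVariance_eq_sum_mul_sq_sub_sq (softmax_mem_stdSimplex _).2, sq (_ ⬝ᵥ _)]
  nth_rw 2 [dotProduct]
  rw [Finset.sum_mul, ← Finset.sum_sub_distrib]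
  exact Finset.sum_congr rfl fun y _ ↦ by ring

end Softmax

section SoftmaxLoss

variable {Y : Type*} [Fintype Y]

/-- The residual of the model `β * log (softmax a y)` against the target `b y`. The
reward-approximation residual at a fixed prompt `x` is of this form, with `β = 1 / τ`. -/
noncomputable def logResidual (β : ℝ) (b a : Y → ℝ) (y : Y) : ℝ :=
  β * (a y - logSumExp a) - b y

/-- The mean squared residual under the softmax distribution: the contribution of a single prompt
to the reward-approximation loss. -/
noncomputable def softmaxLoss (β : ℝ) (b a : Y → ℝ) : ℝ :=
  ∑ y, softmax a y * logResidual β b a y ^ 2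

/-- The closed form of the first derivative of `softmaxLoss β b` at `a` in the direction `z`. -/
noncomputable def softmaxLossDeriv (β : ℝ) (b a z : Y → ℝ) : ℝ :=
  ∑ y, softmax a y * (z y - softmax a ⬝ᵥ z) *
    (logResidual β b a y ^ 2 + 2 * β * logResidual β b a y)

/-- The closed form of the second derivative of `softmaxLoss β b` at `a` in the direction `z`. -/
noncomputable def softmaxLossSecondDeriv (β : ℝ) (b a z : Y → ℝ) : ℝ :=
  ∑ y, softmax a y * (z y - softmax a ⬝ᵥ z) ^ 2 *
      (logResidual β b a y ^ 2 + 4 * β * logResidual β b a y + 2 * β ^ 2) -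
    weightedVariance (softmax a) z *
      ∑ y, softmax a y * (logResidual β b a y ^ 2 + 2 * β * logResidual β b a y)

lemma mul_log_mul_softmax_sub {S : ℝ} (hS : S ≠ 0) (β : ℝ) (q a : Y → ℝ) (y : Y) :
    β * Real.log (S * softmax a y) - q y =
      logResidual β (fun y' ↦ q y' - β * Real.log S) a y := by
  rw [logResidual, softmax, Real.log_mul hS (Real.exp_ne_zero _), Real.log_exp]
  ring

variable [Nonempty Y]

lemma contDiff_softmaxLoss {n : WithTop ℕ∞} (β : ℝ) (b : Y → ℝ) :
    ContDiff ℝ n (softmaxLoss β b) := by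
  have hlse := contDiff_logSumExp (Y := Y) (n := n)
  unfold softmaxLoss softmax logResidual
  fun_prop

variable {a : ℝ → Y → ℝ} {z : Y → ℝ} {t : ℝ}

lemma hasDerivAt_logResidual (β : ℝ) (b : Y → ℝ) (ha : HasDerivAt a z t) (y : Y) :
    HasDerivAt (fun s ↦ logResidual β b (a s) y) (β * (z y - softmax (a t) ⬝ᵥ z)) t :=
  ((hasDerivAt_sub_logSumExp ha y).const_mul β).sub_const (b y)

lemma hasDerivAt_softmaxLoss (β : ℝ) (b : Y → ℝ) (ha : HasDerivAt a z t) :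
    HasDerivAt (fun s ↦ softmaxLoss β b (a s)) (softmaxLossDeriv β b (a t) z) t := by
  refine HasDerivAt.fun_sum fun y _ ↦ ?_
  refine ((hasDerivAt_softmax ha y).fun_mul
    ((hasDerivAt_logResidual β b ha y).fun_pow 2)).congr_deriv ?_
  push_cast
  ring

lemma hasDerivAt_softmaxLossDeriv (β : ℝ) (b : Y → ℝ) (ha : HasDerivAt a z t) :
    HasDerivAt (fun s ↦ softmaxLossDeriv β b (a s) z) (softmaxLossSecondDeriv β b (a t) z) t := by
  rw [softmaxLossSecondDeriv, Finset.mul_sum, ← Finset.sum_sub_distrib]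
  refine HasDerivAt.fun_sum fun y _ ↦ ?_
  have hres := hasDerivAt_logResidual β b ha y
  refine (((hasDerivAt_softmax ha y).fun_mul
    ((hasDerivAt_softmax_dotProduct ha).const_sub (z y))).fun_mul
    ((hres.fun_pow 2).fun_add (hres.const_mul (2 * β)))).congr_deriv ?_
  push_cast
  ring

lemma abs_softmaxLossSecondDeriv_le {β ε : ℝ} {b a : Y → ℝ}
    (hε : ∀ y, |logResidual β b a y| ≤ ε) (z : Y → ℝ) :
    |softmaxLossSecondDeriv β b a z| ≤
      (2 * ε ^ 2 + 6 * |β| * ε + 2 * β ^ 2) * weightedVariance (softmax a) z := by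
  have hp := softmax_nonneg a
  set V := weightedVariance (softmax a) z
  have hV : 0 ≤ V := weightedVariance_nonneg hp z
  have hcurvature : |∑ y, softmax a y * (z y - softmax a ⬝ᵥ z) ^ 2 *
      (logResidual β b a y ^ 2 + 4 * β * logResidual β b a y + 2 * β ^ 2)| ≤
      V * (ε ^ 2 + 4 * |β| * ε + 2 * β ^ 2) := by
    refine abs_sum_mul_le_sum_mul (fun y ↦ mul_nonneg (hp y) (sq_nonneg _)) fun y ↦ ?_
    refine (abs_add_le _ _).trans (add_le_add ?_ (abs_of_nonneg (by positivity)).le)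
    simpa [abs_mul] using abs_sq_add_mul_le (hε y) (4 * β)
  have hmean : |∑ y, softmax a y * (logResidual β b a y ^ 2 + 2 * β * logResidual β b a y)| ≤
      ε ^ 2 + 2 * |β| * ε := by
    simpa [(softmax_mem_stdSimplex a).2, abs_mul] using
      abs_sum_mul_le_sum_mul hp fun y ↦ abs_sq_add_mul_le (hε y) (2 * β)
  calc |softmaxLossSecondDeriv β b a z|
      ≤ V * (ε ^ 2 + 4 * |β| * ε + 2 * β ^ 2) + V * (ε ^ 2 + 2 * |β| * ε) := by
        refine (abs_sub _ _).trans (add_le_add hcurvature ?_)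
        rw [abs_mul, abs_of_nonneg hV]
        exact mul_le_mul_of_nonneg_left hmean hV
    _ = (2 * ε ^ 2 + 6 * |β| * ε + 2 * β ^ 2) * V := by ring

end SoftmaxLoss

section PolicyLoss

variable {X Y : Type*} [Fintype X] [Fintype Y]

/-- The reward-approximation loss with arbitrary real weights `D` on the prompts and residuals
written as `logResidual β (b x)`. -/
noncomputable def policyLoss (D : X → ℝ) (β : ℝ) (b : X → Y → ℝ) (θ : X × Y → ℝ) : ℝ :=
  ∑ x, D x * softmaxLoss β (b x) fun y ↦ θ (x, y)

variable [Nonempty Y] (D : X → ℝ) (β : ℝ) (b : X → Y → ℝ)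

lemma contDiff_policyLoss {n : WithTop ℕ∞} : ContDiff ℝ n (policyLoss D β b) :=
  ContDiff.sum fun x _ ↦ contDiff_const.mul ((contDiff_softmaxLoss β (b x)).comp (by fun_prop))

lemma fderiv_fderiv_policyLoss_apply_apply_self (θ z : X × Y → ℝ) :
    fderiv ℝ (fderiv ℝ (policyLoss D β b)) θ z z =
      ∑ x, D x * softmaxLossSecondDeriv β (b x) (fun y ↦ θ (x, y)) fun y ↦ z (x, y) := by
  have hdiff : ContDiff ℝ 2 (policyLoss D β b) := contDiff_policyLoss D β b
  have hline (η : X × Y → ℝ) (x : X) :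
      HasDerivAt (fun (t : ℝ) y ↦ (η + t • z) (x, y)) (fun y ↦ z (x, y)) 0 :=
    hasDerivAt_pi.2 fun y ↦ by
      simpa using ((hasDerivAt_id (0 : ℝ)).mul_const (z (x, y))).const_add (η (x, y))
  refine fderiv_fderiv_apply_apply_self_of_hasLineDerivAt
    (g := fun η ↦ ∑ x, D x * softmaxLossDeriv β (b x) (fun y ↦ η (x, y)) fun y ↦ z (x, y))
    (hdiff.differentiable two_ne_zero)
    ((hdiff.fderiv_right (m := 1) le_rfl).differentiable one_ne_zero θ) (fun η ↦ ?_) ?_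
  · refine HasDerivAt.fun_sum fun x _ ↦ ?_
    simpa using (hasDerivAt_softmaxLoss β (b x) (hline η x)).const_mul (D x)
  · refine HasDerivAt.fun_sum fun x _ ↦ ?_
    simpa using (hasDerivAt_softmaxLossDeriv β (b x) (hline θ x)).const_mul (D x)

variable {D β b}

lemma abs_fderiv_fderiv_policyLoss_le {ε : ℝ} {θ : X × Y → ℝ}
    (hε : ∀ x y, |logResidual β (b x) (fun y' ↦ θ (x, y')) y| ≤ ε) (z : X × Y → ℝ) :
    |fderiv ℝ (fderiv ℝ (policyLoss D β b)) θ z z| ≤ (2 * ε ^ 2 + 6 * |β| * ε + 2 * β ^ 2) *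
      ∑ x, |D x| * weightedVariance (softmax fun y ↦ θ (x, y)) fun y ↦ z (x, y) := by
  rw [fderiv_fderiv_policyLoss_apply_apply_self, Finset.mul_sum]
  refine (Finset.abs_sum_le_sum_abs _ _).trans (Finset.sum_le_sum fun x _ ↦ ?_)
  rw [abs_mul, mul_left_comm]
  exact mul_le_mul_of_nonneg_left (abs_softmaxLossSecondDeriv_le (hε x) _) (abs_nonneg _)

lemma sum_mul_weightedVariance_softmax_le (hD : D ∈ stdSimplex ℝ X) (θ z : X × Y → ℝ) :
    ∑ x, |D x| * weightedVariance (softmax fun y ↦ θ (x, y)) (fun y ↦ z (x, y)) ≤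
      ∑ p, z p ^ 2 := by
  rw [Fintype.sum_prod_type]
  refine Finset.sum_le_sum fun x _ ↦ ?_
  rw [abs_of_nonneg (hD.1 x)]
  exact (mul_le_of_le_one_left (weightedVariance_nonneg (softmax_nonneg _) _)
    (mem_Icc_of_mem_stdSimplex hD x).2).trans
      (weightedVariance_le_sum_sq (softmax_mem_stdSimplex _) _)

end PolicyLoss

/-- The Reward-Approximation loss of the softmax-parametrized policy
satisfies, at every θ with |r_θ(x,y) − r(x,y)| ≤ ε₁ for all x, y, the
second-derivative bound
|D²L(θ)(z,z)| ≤ (3ε₁² + 18ε₁/τ + 8/τ² + max{ε₁² + 2ε₁/τ, 1/τ})·Σ_{x,y} z(x,y)². -/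
theorem reward_approximation_loss_smooth
    {X Y : Type*} [Fintype X] [Fintype Y] [Nonempty X] [Nonempty Y]
    (r : X → Y → ℝ) (τ : ℝ) (hτ : 0 < τ)
    (D : X → ℝ) (hD0 : ∀ x, 0 ≤ D x) (hD1 : ∑ x : X, D x = 1)
    (Z : X → ℝ) (hZ : ∀ x, Z x = ∑ y' : Y, Real.exp (τ * r x y'))
    (πθ : (X × Y → ℝ) → X → Y → ℝ)
    (hπθ : ∀ θ x y, πθ θ x y = Real.exp (θ (x, y)) / ∑ y' : Y, Real.exp (θ (x, y')))
    (rθ : (X × Y → ℝ) → X → Y → ℝ)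
    (hrθ : ∀ θ x y, rθ θ x y = (1 / τ) * Real.log (Z x * πθ θ x y))
    (L : (X × Y → ℝ) → ℝ)
    (hL : ∀ θ, L θ = ∑ x : X, D x * ∑ y : Y,
      πθ θ x y * (rθ θ x y - r x y) ^ 2)
    (ε₁ : ℝ) (hε₁ : 0 ≤ ε₁)
    (θ : X × Y → ℝ)
    (hθ : ∀ x y, |rθ θ x y - r x y| ≤ ε₁) :
    ∀ z : X × Y → ℝ,
      |fderiv ℝ (fderiv ℝ L) θ z z| ≤
        (3 * ε₁ ^ 2 + 18 * ε₁ / τ + 8 / τ ^ 2 +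
          max (ε₁ ^ 2 + 2 * ε₁ / τ) (1 / τ)) * ∑ p : X × Y, z p ^ 2 := by
  intro z
  let b : X → Y → ℝ := fun x y ↦ r x y - 1 / τ * Real.log (Z x)
  have hπ (η : X × Y → ℝ) (x : X) (y : Y) : πθ η x y = softmax (fun y' ↦ η (x, y')) y := by
    rw [hπθ, softmax_eq_div]
  have hres (η : X × Y → ℝ) (x : X) (y : Y) :
      rθ η x y - r x y = logResidual (1 / τ) (b x) (fun y' ↦ η (x, y')) y := by
    rw [hrθ, hπ, mul_log_mul_softmax_sub (hZ x ▸ (sum_exp_pos _).ne')]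
  obtain rfl : L = policyLoss D (1 / τ) b :=
    funext fun η ↦ by simp only [hL, hπ, hres, policyLoss, softmaxLoss]
  simp only [hres] at hθ
  have hconst : 2 * ε₁ ^ 2 + 6 * |1 / τ| * ε₁ + 2 * (1 / τ) ^ 2 ≤
      3 * ε₁ ^ 2 + 18 * ε₁ / τ + 8 / τ ^ 2 + max (ε₁ ^ 2 + 2 * ε₁ / τ) (1 / τ) := by
    have hmax : 0 ≤ max (ε₁ ^ 2 + 2 * ε₁ / τ) (1 / τ) := le_max_of_le_right (by positivity)
    have hcross : 0 ≤ ε₁ / τ := by positivity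
    rw [abs_of_pos (one_div_pos.2 hτ)]
    linear_combination hmax + 12 * hcross + 6 * sq_nonneg (1 / τ) + sq_nonneg ε₁
  calc |fderiv ℝ (fderiv ℝ (policyLoss D (1 / τ) b)) θ z z|
      ≤ (2 * ε₁ ^ 2 + 6 * |1 / τ| * ε₁ + 2 * (1 / τ) ^ 2) * ∑ p, z p ^ 2 :=
        (abs_fderiv_fderiv_policyLoss_le hθ z).trans <| mul_le_mul_of_nonneg_left
          (sum_mul_weightedVariance_softmax_le ⟨hD0, hD1⟩ θ z) (by positivity)
    _ ≤ _ := mul_le_mul_of_nonneg_right hconst (Finset.sum_nonneg fun p _ ↦ sq_nonneg (z p))
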